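/- Let K be a positive natural number, m : Fin K → ℕ a family of counts, not all zero, with total n = ∑_k m(k) > 0, set q(k) = m(k)/n, and let p : Fin K → ℝ satisfy p(k) > 0 for all k and ∑_k p(k) = 1. Then, as j → ∞ along the natural numbers, (1/(j·n)) · log( ((j·n)! / ∏_k (j·m(k))!) · ∏_k p(k)^{j·m(k)} ) tends to −∑_k q(k) log(q(k)/p(k)), where terms with q(k) = 0 are interpreted as 0. -/

import Mathlib

open Real Filter

/-- The error term in the crude Stirling approximation of `log N!`. -/
noncomputable def stirErr (N : ℕ) : ℝ :=
  Real.log (N.factorial : ℝ) - ((N : ℝ) * Real.log N - N)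

lemma stirErr_div_tendsto : Tendsto (fun N : ℕ => stirErr N / (N : ℝ)) atTop (nhds 0) := by
  have hinv : Tendsto (fun N : ℕ => ((N : ℝ))⁻¹) atTop (nhds 0) :=
    tendsto_inv_atTop_nhds_zero_nat
  have h1 : Tendsto (fun N : ℕ => Real.log (Stirling.stirlingSeq N)) atTop
      (nhds (Real.log (√π))) :=
    Stirling.tendsto_stirlingSeq_sqrt_pi.log (by positivity)
  have h2 : Tendsto (fun N : ℕ => Real.log (N : ℝ) / (N : ℝ)) atTop (nhds 0) :=
    (Real.isLittleO_log_id_atTop.tendsto_div_nhds_zero).comp tendsto_natCast_atTop_atTop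
  have h3 := (h1.mul hinv).add ((hinv.const_mul (1 / 2 * Real.log 2)).add (h2.const_mul (1 / 2)))
  simp only [mul_zero, add_zero] at h3
  refine h3.congr' ?_
  filter_upwards [eventually_gt_atTop 0] with N hN
  have hN' : (0 : ℝ) < N := by exact_mod_cast hN
  rw [Stirling.log_stirlingSeq_formula, stirErr, Real.log_div hN'.ne' (Real.exp_pos 1).ne',
    Real.log_exp, Real.log_mul two_ne_zero hN'.ne']
  field_simp
  ring

lemma stirErr_mul_div_tendsto (a : ℕ) :
    Tendsto (fun j : ℕ => stirErr (j * a) / (j : ℝ)) atTop (nhds 0) := by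
  rcases Nat.eq_zero_or_pos a with rfl | ha
  · simp [stirErr]
  · have h : Tendsto (fun j : ℕ => j * a) atTop atTop :=
      tendsto_id.atTop_mul_const' ha
    have h2 := (stirErr_div_tendsto.comp h).mul_const (a : ℝ)
    rw [zero_mul] at h2
    refine h2.congr' ?_
    filter_upwards [eventually_gt_atTop 0] with j hj
    have hj' : (0 : ℝ) < j := by exact_mod_cast hj
    have ha' : (0 : ℝ) < a := by exact_mod_cast ha
    simp only [Function.comp, Nat.cast_mul]
    field_simp

/-- Boltzmann's combinatorial derivation of entropy with a prior measure: the normalised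
logarithm of the multinomial probability of the counts `j·m(k)` under class
probabilities `p` tends to the negative Kullback–Leibler divergence
`−∑ₖ q(k) log(q(k)/p(k))` of the frequency vector `q(k) = m(k)/n` from `p` as `j → ∞`.
Terms with `q k = 0` vanish since they are multiplied by `q k = 0`. -/
theorem log_multinomial_prob_tendsto_relative_entropy
    (K : ℕ) (hK : 0 < K) (m : Fin K → ℕ) (hm : m ≠ 0)
    (n : ℕ) (hn : n = ∑ k, m k) (hnpos : 0 < n)
    (q : Fin K → ℝ) (hq : q = fun k => (m k : ℝ) / (n : ℝ))
    (p : Fin K → ℝ) (hp0 : ∀ k, 0 < p k) (hp1 : ∑ k, p k = 1) :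
    Tendsto
      (fun j : ℕ =>
        (1 / ((j : ℝ) * (n : ℝ))) *
          Real.log ((Nat.multinomial Finset.univ (fun k => j * m k) : ℝ) *
            ∏ k, p k ^ (j * m k)))
      atTop (nhds (-∑ k, q k * Real.log (q k / p k))) := by
  have hn' : (0 : ℝ) < n := by exact_mod_cast hnpos
  have herr : Tendsto (fun j : ℕ => (1 / (n : ℝ)) *
      (stirErr (j * n) / (j : ℝ) - ∑ k, stirErr (j * m k) / (j : ℝ))) atTop (nhds 0) := by
    have := ((stirErr_mul_div_tendsto n).sub
      (tendsto_finsetSum Finset.univ fun k _ => stirErr_mul_div_tendsto (m k))).const_mul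
        (1 / (n : ℝ))
    simpa using this
  have hmain := herr.const_add (-∑ k, q k * Real.log (q k / p k))
  rw [add_zero] at hmain
  refine hmain.congr' ?_
  filter_upwards [eventually_gt_atTop 0] with j hj
  have hj' : (0 : ℝ) < j := by exact_mod_cast hj
  have hlogM : Real.log (Nat.multinomial Finset.univ (fun k => j * m k) : ℝ) =
      Real.log ((j * n).factorial : ℝ) - ∑ k, Real.log ((j * m k).factorial : ℝ) := by
    have hs := Nat.multinomial_spec Finset.univ (fun k => j * m k)
    rw [← Finset.mul_sum, ← hn] at hs
    rw [← hs]
    push_cast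
    rw [Real.log_mul, Real.log_prod]
    · ring
    · intro k _
      positivity
    · exact Finset.prod_ne_zero_iff.mpr fun k _ => by positivity
    · exact_mod_cast (Nat.multinomial_pos _ _).ne'
  have hlogP : Real.log (∏ k, p k ^ (j * m k)) = ∑ k, (j : ℝ) * m k * Real.log (p k) := by
    rw [Real.log_prod fun k _ => (pow_pos (hp0 k) _).ne']
    simp [Real.log_pow]
  have hterm : ∀ k, q k * Real.log (q k / p k) =
      (1 / ((j : ℝ) * n)) * ((j : ℝ) * m k * Real.log (j * m k)
        - (j : ℝ) * m k * Real.log (j * n) - (j : ℝ) * m k * Real.log (p k)) := by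
    intro k
    rw [hq]
    rcases Nat.eq_zero_or_pos (m k) with h0 | h0
    · simp [h0]
    · have hmk : (0 : ℝ) < m k := by exact_mod_cast h0
      simp only []
      rw [Real.log_div (by positivity) (hp0 k).ne', Real.log_div hmk.ne' hn'.ne',
        Real.log_mul hj'.ne' hmk.ne', Real.log_mul hj'.ne' hn'.ne']
      field_simp
      ring
  have hsum : (n : ℝ) = ∑ k, (m k : ℝ) := by rw [hn]; push_cast; rfl
  rw [Real.log_mul (by exact_mod_cast (Nat.multinomial_pos _ _).ne')
    (Finset.prod_ne_zero_iff.mpr fun k _ => (pow_pos (hp0 k) _).ne'), hlogM, hlogP]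
  simp only [hterm, stirErr, Nat.cast_mul]
  rw [← Finset.mul_sum, ← Finset.sum_div]
  simp only [Finset.sum_sub_distrib, ← Finset.sum_mul, ← Finset.mul_sum, ← hsum]
  field_simp
  ring
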